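/- Pfaffian Plücker relations: Let (X_i, X_j) denote entries of a skew-symmetric array on a set of symbols, and (X_{k_1},...,X_{k_{2m}}) denote the Pfaffian of the corresponding submatrix. Then for odd integers R and S, Σ_{r=1}^{R} (-1)^r (X_{i_1},...,X_{i_S}, X_{j_r})(X_{j_1},...,X̂_{j_r},...,X_{j_R}) + Σ_{s=1}^{S} (-1)^s (X_{i_1},...,X̂_{i_s},...,X_{i_S})(X_{j_1},...,X_{j_R}, X_{i_s}) = 0, where hats denote omission. -/

import Mathlib

/-- The Pfaffian `(X_{k_1},…,X_{k_{2m}})` of the skew-symmetric array of pairings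
`a (X_i) (X_j)`, on a list of symbols, defined through the expansion along the
first entry.  For odd-length lists the value is `0`, and for the empty list `1`. -/
noncomputable def pfL {R : Type*} [CommRing R] {α : Type*} (a : α → α → R) : List α → R
  | [] => 1
  | x :: xs => ∑ j : Fin xs.length,
      (-1 : R) ^ (j : ℕ) * a x (xs.get j) * pfL a (xs.eraseIdx j)
termination_by l => l.length
decreasing_by
  simp only [List.length_cons]
  have h1 : (xs.eraseIdx j).length ≤ xs.length := List.length_eraseIdx_le ..
  omega

/-- Alternating sum over the choice of one element of a list. -/
noncomputable def altE {R : Type*} [CommRing R] {α : Type*} (g : α → List α → R) (t : List α) : R :=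
  ∑ j : Fin t.length, (-1 : R) ^ (j : ℕ) * g (t.get j) (t.eraseIdx j)

theorem altE_nil {R : Type*} [CommRing R] {α : Type*} (g : α → List α → R) :
    altE g [] = 0 := by
  simp [altE]

theorem altE_cons {R : Type*} [CommRing R] {α : Type*} (g : α → List α → R) (u : α) (t : List α) :
    altE g (u :: t) = g u t - altE (fun v l => g v (u :: l)) t := by
  unfold altE
  rw [sub_eq_add_neg, ← Finset.sum_neg_distrib]
  refine (Fin.sum_univ_succ (n := t.length) _).trans ?_
  congr 1
  · simp
  · refine Finset.sum_congr rfl fun j _ => ?_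
    simp [pow_succ]

theorem altE_sub {R : Type*} [CommRing R] {α : Type*} (g h : α → List α → R) (t : List α) :
    altE (fun v l => g v l - h v l) t = altE g t - altE h t := by
  simp [altE, mul_sub, Finset.sum_sub_distrib]

theorem altE_mul {R : Type*} [CommRing R] {α : Type*} (c : R) (g : α → List α → R) (t : List α) :
    altE (fun v l => c * g v l) t = c * altE g t := by
  simp only [altE, Finset.mul_sum]
  exact Finset.sum_congr rfl fun j _ => by ring

theorem altE_congr {R : Type*} [CommRing R] {α : Type*} (g h : α → List α → R) (t : List α)
    (H : ∀ v l, l.length + 1 = t.length → g v l = h v l) : altE g t = altE h t := by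
  unfold altE
  refine Finset.sum_congr rfl fun j _ => ?_
  rw [H]
  have := j.2
  rw [List.length_eraseIdx_of_lt this]
  omega

theorem altE_altE {R : Type*} [CommRing R] {α : Type*} (t : List α) :
    ∀ F : α → α → List α → R, altE (fun v l => altE (fun w m => F v w m) l) t
      = - altE (fun v l => altE (fun w m => F w v m) l) t := by
  induction t with
  | nil => intro F; simp [altE_nil]
  | cons u t ih =>
    intro F
    simp only [altE_cons, altE_sub]
    rw [ih (fun v w m => F v w (u :: m))]
    ring

theorem altE_append {R : Type*} [CommRing R] {α : Type*} (y : α) (t : List α) :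
    ∀ g : α → List α → R, altE g (t ++ [y])
      = altE (fun v l => g v (l ++ [y])) t + (-1) ^ t.length * g y t := by
  induction t with
  | nil => intro g; simp [altE_nil, altE_cons]
  | cons u t ih =>
    intro g
    simp only [List.cons_append, altE_cons, ih, List.length_cons, pow_succ]
    ring

theorem pfL_cons_altE {R : Type*} [CommRing R] {α : Type*} (a : α → α → R) (x : α) (t : List α) :
    pfL a (x :: t) = altE (fun v l => a x v * pfL a l) t := by
  rw [pfL]
  unfold altE
  exact Finset.sum_congr rfl fun j _ => by ring

/-- Expansion of the Pfaffian along the last entry. -/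
theorem pfL_append_altE {R : Type*} [CommRing R] {α : Type*} (a : α → α → R) (y : α) (n : ℕ) :
    ∀ t : List α, t.length = 2 * n + 1 →
      pfL a (t ++ [y]) = altE (fun v l => a v y * pfL a l) t := by
  induction n with
  | zero =>
    intro t ht
    obtain ⟨x, rfl⟩ := List.length_eq_one_iff.mp (by simpa using ht)
    simp [pfL_cons_altE, altE_cons, altE_nil]
  | succ n ih =>
    intro t ht
    match t, ht with
    | x :: t, ht =>
      have hl : t.length = 2 * (n + 1) := by simpa using ht
      rw [List.cons_append, pfL_cons_altE, altE_append, altE_cons, hl, pow_mul]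
      have h1 : altE (fun v l => a x v * pfL a (l ++ [y])) t
          = altE (fun v l => altE (fun w m => a x v * (a w y * pfL a m)) l) t := by
        refine altE_congr _ _ _ fun v l h => ?_
        rw [ih l (by omega), altE_mul]
      have h2 : altE (fun v l => a v y * pfL a (x :: l)) t
          = altE (fun v l => altE (fun w m => a x w * (a v y * pfL a m)) l) t := by
        refine altE_congr _ _ _ fun v l h => ?_
        rw [pfL_cons_altE, ← altE_mul]
        exact altE_congr _ _ _ fun w m _ => by ring
      rw [h1, h2, altE_altE t (fun v w m => a x v * (a w y * pfL a m))]
      simp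
      ring

/-- Pfaffian analogue of the Plücker relations: for lists `xs = (X_{i_1},…,X_{i_S})`
and `ys = (X_{j_1},…,X_{j_R})` of odd lengths `S`, `R`,
`Σ_{r=1}^{R} (-1)^r (X_{i_1},…,X_{i_S},X_{j_r})(X_{j_1},…,X̂_{j_r},…,X_{j_R})
 + Σ_{s=1}^{S} (-1)^s (X_{i_1},…,X̂_{i_s},…,X_{i_S})(X_{j_1},…,X_{j_R},X_{i_s}) = 0`. -/
theorem stmt3 {R : Type*} [CommRing R] {α : Type*} (a : α → α → R)
    (hskew : ∀ x y, a x y = - a y x) (xs ys : List α)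
    (hS : Odd xs.length) (hR : Odd ys.length) :
    (∑ r : Fin ys.length,
        (-1 : R) ^ ((r : ℕ) + 1) * pfL a (xs ++ [ys.get r]) * pfL a (ys.eraseIdx r))
    + (∑ s : Fin xs.length,
        (-1 : R) ^ ((s : ℕ) + 1) * pfL a (xs.eraseIdx s) * pfL a (ys ++ [xs.get s])) = 0 := by
  obtain ⟨m, hm⟩ := hS
  obtain ⟨n, hn⟩ := hR
  simp only [pfL_append_altE a _ m xs hm, pfL_append_altE a _ n ys hn, altE, Finset.mul_sum,
    Finset.sum_mul]
  rw [Finset.sum_comm, ← Finset.sum_add_distrib]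
  refine Finset.sum_eq_zero fun s _ => ?_
  rw [← Finset.sum_add_distrib]
  refine Finset.sum_eq_zero fun r _ => ?_
  rw [hskew (ys.get r) (xs.get s)]
  ring
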